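/- Suppose the Markov chain Φ is ψ-irreducible. Then Φ is transient if and only if for every petite set B ∈ B+(X) there exists a set A ⊆ B with ψ(A) > 0 such that sup_{x∈A} L(x,A) < 1. -/

import Mathlib

/-!
Write `U(x, A) = ∑_{n ≥ 1} P^n(x, A)` and let `K = ∑ₙ 2^{-(n+1)} P^{n+1}` be the resolvent, so that
`K(x, A) > 0` if and only if `U(x, A) > 0`. All probabilistic arguments about return times are
replaced by inductions on the one-step recursions of `P_x(τ_A ≤ n)` and `∑_{k ≤ n} P^k(x, A)`.

**Transience gives the return-probability condition** (`exists_retL_lt`). Any `B ∈ B⁺(X)` meets one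
of the uniformly transient covering sets in a set `C ∈ B⁺(X)` with `U(·, C)` finite on `C`. If
`L(·, C) < 1` on a part of `C` of positive measure, then some `A = {x ∈ C : L(x, C) ≤ 1 - 1/(n+1)}`
works, since `L` is monotone in the target set. Otherwise, maximality of `ψ` (`null_of_null`) allows
one to discard a null set and obtain `C' ⊆ C`, of positive measure, from which `C \ C'` is
unreachable and `C'` is hit again with probability one. With `c = inf_{C'} (1 + U(·, C))`, one has
`c L(·, C') ≤ U(·, C)` (`mul_retL_le`), so `1 + c ≤ c`, contradicting finiteness of `c`.

**The converse.** If `A ∈ B⁺(X)` and `L(·, A) ≤ q < 1` on `A`, then `U(·, A) ≤ (1 - q)⁻¹` everywhere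
(`pot_le`), and the sets `{K(·, A) ≥ 1/(n+1)}`, which increase to `X`, are uniformly transient
because `P^m K(x, A)` is summable in `m` (`transient_of_retL_lt`). To obtain such an `A` from the
hypothesis, a petite set in `B⁺(X)` is needed (`exists_petite`). Let `φ` be a probability measure
equivalent to `ψ`. Irreducibility says `φ ≪ K(x, ·)` for all `x`, and since the σ-algebra is
countably generated, `K` has a jointly measurable density `k` with respect to `φ`, with
`k(x, ·) > 0` almost everywhere. So `{k < δ}` has small `φ ⊗ φ`-measure for small `δ`; its
sections in both directions are then small over sets `B` and `C` of positive measure, and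
`∫ k(x, z) k(z, y) φ(dz) ≥ δ²/2` on `B × C`. Hence `K²(x, ·) ≥ (δ²/2) φ|_C` for `x ∈ B`, and `K²` is
a sampled kernel of `P`.
-/

open MeasureTheory ProbabilityTheory
open scoped ENNReal NNReal Classical

namespace MarkovTransience

variable {X : Type*} [MeasurableSpace X]

/-- `iterP P n x A` is the `n`-step transition probability `P^n(x, A)`. -/
noncomputable def iterP (P : Kernel X X) : ℕ → X → Set X → ℝ≥0∞
  | 0 => fun x A => A.indicator (fun _ => 1) x
  | n + 1 => fun x A => ∫⁻ y, iterP P n y A ∂(P x)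

/-- `retF P A n x` is `F^n(x, A) = P_x(τ_A = n)`, the probability that the first
return to `A` happens at time `n`. -/
noncomputable def retF (P : Kernel X X) (A : Set X) : ℕ → X → ℝ≥0∞
  | 0 => fun _ => 0
  | 1 => fun x => P x A
  | n + 2 => fun x => ∫⁻ y in Aᶜ, retF P A (n + 1) y ∂(P x)

/-- `retL P A x = L(x, A) = P_x(τ_A < ∞)`. -/
noncomputable def retL (P : Kernel X X) (A : Set X) (x : X) : ℝ≥0∞ :=
  ∑' n, retF P A n x

/-- `retE P A r x = E_x[r(τ_A) 1_{τ_A < ∞}]`. -/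
noncomputable def retE (P : Kernel X X) (A : Set X) (r : ℕ → ℝ≥0∞) (x : X) : ℝ≥0∞ :=
  ∑' n, r n * retF P A n x

/-- `hitE P A r x = E_x[r(σ_A) 1_{σ_A < ∞}]`, `σ_A` the first hitting time. -/
noncomputable def hitE (P : Kernel X X) (A : Set X) (r : ℕ → ℝ≥0∞) (x : X) : ℝ≥0∞ :=
  if x ∈ A then r 0 else retE P A r x

/-- `act P W x = PW(x) = ∫ W(y) P(x, dy)`. -/
noncomputable def act (P : Kernel X X) (W : X → ℝ≥0∞) (x : X) : ℝ≥0∞ :=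
  ∫⁻ y, W y ∂(P x)

/-- `ψ`-irreducibility: `ψ` is a nontrivial σ-finite measure such that every set of
positive `ψ`-measure is reached with positive probability from every starting point. -/
def IsIrreducibility (P : Kernel X X) (ψ : Measure X) : Prop :=
  ψ ≠ 0 ∧ SigmaFinite ψ ∧
    ∀ A : Set X, MeasurableSet A → 0 < ψ A → ∀ x, 0 < ∑' n, iterP P (n + 1) x A

/-- `ψ` is a maximal irreducibility measure for `P`. -/
def IsMaxIrreducibility (P : Kernel X X) (ψ : Measure X) : Prop :=
  IsIrreducibility P ψ ∧ ∀ ψ' : Measure X, IsIrreducibility P ψ' → ψ' ≪ ψ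

/-- `A ∈ B⁺(X)`: a measurable set of positive `ψ`-measure. -/
def InBPlus (ψ : Measure X) (A : Set X) : Prop :=
  MeasurableSet A ∧ 0 < ψ A

/-- A petite set. -/
def PetiteSet (P : Kernel X X) (A : Set X) : Prop :=
  ∃ (a : ℕ → ℝ≥0∞) (ν : Measure X), (∑' n, a n) = 1 ∧ ν ≠ 0 ∧
    ∀ x ∈ A, ∀ B : Set X, MeasurableSet B → ν B ≤ ∑' n, a n * iterP P (n + 1) x B

/-- The chain is transient. -/
def Transient (P : Kernel X X) (ψ : Measure X) : Prop :=
  IsMaxIrreducibility P ψ ∧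
    ∃ A : ℕ → Set X, (⋃ i, A i) = Set.univ ∧
      ∀ i, InBPlus ψ (A i) ∧ (⨆ x ∈ A i, ∑' n, iterP P (n + 1) x (A i)) < ⊤

/-- A uniformly geometric transient set. -/
def UnifGeomTransientSet (P : Kernel X X) (A : Set X) : Prop :=
  ∃ κ : ℝ≥0, 1 < κ ∧ (⨆ x ∈ A, ∑' n, (κ : ℝ≥0∞) ^ (n + 1) * iterP P (n + 1) x A) < ⊤

/-- The chain is geometrically transient. -/
def GeomTransient (P : Kernel X X) (ψ : Measure X) : Prop :=
  IsMaxIrreducibility P ψ ∧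
    ∃ (D : Set X) (A : ℕ → Set X), ψ D = 0 ∧ D ∪ (⋃ i, A i) = Set.univ ∧
      ∀ i, InBPlus ψ (A i) ∧ UnifGeomTransientSet P (A i)

/-- A uniformly `ℓ`-transient set. -/
def UnifAlgTransientSet (P : Kernel X X) (ℓ : ℕ) (A : Set X) : Prop :=
  (⨆ x ∈ A, ∑' n, ((n + 1 : ℕ) : ℝ≥0∞) ^ ℓ * iterP P (n + 1) x A) < ⊤

/-- The chain is algebraically (`ℓ`-)transient. -/
def AlgTransient (P : Kernel X X) (ψ : Measure X) (ℓ : ℕ) : Prop :=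
  IsMaxIrreducibility P ψ ∧
    ∃ (D : Set X) (A : ℕ → Set X), ψ D = 0 ∧ D ∪ (⋃ i, A i) = Set.univ ∧
      ∀ i, InBPlus ψ (A i) ∧ UnifAlgTransientSet P ℓ (A i)

/-- `lifeDist P x n = P_x(τ = n)` where `τ = sup{n : Φ_n ∈ X}` is the lifetime of the
(sub-stochastic) chain, so that `P_x(τ = n) = P^n(x, X) - P^{n+1}(x, X)`. -/
noncomputable def lifeDist (P : Kernel X X) (x : X) (n : ℕ) : ℝ≥0∞ :=
  iterP P n x Set.univ - iterP P (n + 1) x Set.univ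

/-- `lifeE P r x = E_x[r(τ)]` for the lifetime `τ` (on the event `τ < ∞`). -/
noncomputable def lifeE (P : Kernel X X) (r : ℕ → ℝ≥0∞) (x : X) : ℝ≥0∞ :=
  ∑' n, r n * lifeDist P x n

/-- The family `Λ` of normalized increasing submultiplicative rate functions. -/
def InLambda (r : ℕ → ℝ≥0) : Prop :=
  Monotone r ∧ r 0 = 1 ∧ (∀ n, 1 ≤ r n) ∧ ∀ m n, r (m + n) ≤ r m * r n

/-! ### Iterates and the resolvent as kernels -/

/-- The `n`-step iterate of `P`, bundled as a kernel. -/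
noncomputable def powK (P : Kernel X X) : ℕ → Kernel X X
  | 0 => Kernel.id
  | n + 1 => powK P n ∘ₖ P

lemma iterP_eq (P : Kernel X X) {A : Set X} (hA : MeasurableSet A) (n : ℕ) (x : X) :
    iterP P n x A = powK P n x A := by
  induction n generalizing x with
  | zero => simp only [iterP, powK, Kernel.id_apply, Measure.dirac_apply' _ hA]; rfl
  | succ n ih => simp only [iterP, powK, Kernel.comp_apply' _ _ _ hA, ih]

lemma powK_add (P : Kernel X X) (m n : ℕ) : powK P (m + n) = powK P m ∘ₖ powK P n := by
  induction n with
  | zero => simp [powK]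
  | succ n ih => rw [← add_assoc, powK, ih, powK, Kernel.comp_assoc]

lemma powK_le_one {P : Kernel X X} (hP : ∀ x, P x Set.univ ≤ 1) (n : ℕ) (x : X) :
    powK P n x Set.univ ≤ 1 := by
  induction n generalizing x with
  | zero => simp [powK]
  | succ n ih =>
    rw [powK, Kernel.comp_apply' _ _ _ MeasurableSet.univ]
    calc ∫⁻ y, powK P n y Set.univ ∂(P x) ≤ ∫⁻ _, 1 ∂(P x) := lintegral_mono fun y => ih y
      _ ≤ 1 := by simpa using hP x

lemma measurable_iterP (P : Kernel X X) {A : Set X} (hA : MeasurableSet A) (n : ℕ) :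
    Measurable fun x => iterP P n x A := by
  simp_rw [iterP_eq P hA]
  exact Kernel.measurable_coe _ hA

/-- The geometric weights `2^{-(n+1)}`. -/
noncomputable def wt (n : ℕ) : ℝ≥0∞ := 2⁻¹ ^ (n + 1)

lemma tsum_wt : ∑' n, wt n = 1 := by
  simp only [wt, ENNReal.tsum_geometric_add_one, ENNReal.one_sub_inv_two, inv_inv]
  exact ENNReal.inv_mul_cancel (by simp) (by simp)

lemma wt_ne_zero (n : ℕ) : wt n ≠ 0 := by simp [wt]

/-- The resolvent kernel `K = ∑ₙ 2^{-(n+1)} P^{n+1}`. -/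
noncomputable def res (P : Kernel X X) : Kernel X X where
  toFun x := Measure.sum fun n => wt n • powK P (n + 1) x
  measurable' := by
    refine Measure.measurable_of_measurable_coe _ fun s hs => ?_
    simp only [Measure.sum_apply _ hs, Measure.smul_apply, smul_eq_mul]
    exact Measurable.tsum fun n => (Kernel.measurable_coe _ hs).const_mul _

lemma res_def (P : Kernel X X) (x : X) :
    res P x = Measure.sum fun n => wt n • powK P (n + 1) x := rfl

lemma res_apply (P : Kernel X X) (x : X) {A : Set X} (hA : MeasurableSet A) :
    res P x A = ∑' n, wt n * powK P (n + 1) x A := by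
  simp [res_def, Measure.sum_apply _ hA]

lemma lintegral_res (P : Kernel X X) (x : X) (f : X → ℝ≥0∞) :
    ∫⁻ y, f y ∂(res P x) = ∑' n, wt n * ∫⁻ y, f y ∂(powK P (n + 1) x) := by
  simp [res_def, lintegral_sum_measure]

lemma isFiniteKernel_res {P : Kernel X X} (hP : ∀ x, P x Set.univ ≤ 1) :
    IsFiniteKernel (res P) := by
  refine ⟨⟨1, by simp, fun x => ?_⟩⟩
  rw [res_apply P x MeasurableSet.univ, ← tsum_wt]
  exact ENNReal.tsum_le_tsum fun n => mul_le_of_le_one_right' (powK_le_one hP _ _)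

lemma res_pos_iff (P : Kernel X X) (x : X) {A : Set X} (hA : MeasurableSet A) :
    0 < res P x A ↔ 0 < ∑' n, iterP P (n + 1) x A := by
  simp [pos_iff_ne_zero, res_apply P x hA, iterP_eq P hA, wt_ne_zero, ENNReal.tsum_eq_zero]

lemma lintegral_powK_res (P : Kernel X X) (x : X) (m : ℕ) {A : Set X} (hA : MeasurableSet A) :
    ∫⁻ y, res P y A ∂(powK P m x) = ∑' j, wt j * powK P (j + 1 + m) x A := by
  simp only [res_apply P _ hA]
  rw [lintegral_tsum fun j => ((Kernel.measurable_coe _ hA).const_mul _).aemeasurable]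
  refine tsum_congr fun j => ?_
  rw [lintegral_const_mul _ (Kernel.measurable_coe _ hA), powK_add P (j + 1) m,
    Kernel.comp_apply' _ _ _ hA]

/-- The sampling distribution on time steps whose sampled kernel is `K²`. -/
noncomputable def sq (n : ℕ) : ℝ≥0∞ :=
  ∑' i, ∑' j, if n = j + 1 + i then wt i * wt j else 0

lemma tsum_sq_mul (g : ℕ → ℝ≥0∞) :
    ∑' n, sq n * g n = ∑' i, wt i * ∑' j, wt j * g (j + 1 + i) := by
  simp only [sq, ← ENNReal.tsum_mul_right, ← ENNReal.tsum_mul_left]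
  rw [ENNReal.tsum_comm]
  refine tsum_congr fun i => ?_
  rw [ENNReal.tsum_comm]
  refine tsum_congr fun j => ?_
  rw [tsum_eq_single (j + 1 + i) (by intro n hn; simp [hn])]
  simp [mul_assoc]

lemma tsum_sq : ∑' n, sq n = 1 := by
  have := tsum_sq_mul fun _ => 1
  simpa [tsum_wt] using this

lemma lintegral_res_res (P : Kernel X X) (x : X) {A : Set X} (hA : MeasurableSet A) :
    ∫⁻ y, res P y A ∂(res P x) = ∑' n, sq n * iterP P (n + 1) x A := by
  rw [lintegral_res, tsum_sq_mul]
  refine tsum_congr fun i => ?_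
  simp only [lintegral_powK_res P x _ hA, iterP_eq P hA, add_assoc]

/-- Communication is transitive: if `K(x, {K(·, A) > 0}) > 0` then `K(x, A) > 0`. -/
lemma res_pos_trans (P : Kernel X X) (x : X) {A : Set X} (hA : MeasurableSet A)
    (h : 0 < res P x {y | 0 < res P y A}) : 0 < res P x A := by
  rw [res_pos_iff P x hA, pos_iff_ne_zero]
  intro h0
  have h1 : ∫⁻ y, res P y A ∂(res P x) = 0 := by
    rw [lintegral_res_res P x hA]
    rw [ENNReal.tsum_eq_zero] at h0 ⊢
    intro n; simp [h0 n]
  rw [lintegral_eq_zero_iff (Kernel.measurable_coe _ hA)] at h1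
  have h2 : res P x {y | ¬ res P y A = 0} = 0 := ae_iff.1 h1
  simp only [pos_iff_ne_zero] at h
  exact h h2

/-! ### Potential and return probabilities -/

lemma measurable_retF (P : Kernel X X) {A : Set X} (hA : MeasurableSet A) (n : ℕ) :
    Measurable (retF P A n) := by
  induction n with
  | zero => exact measurable_const
  | succ n ih =>
    cases n with
    | zero => exact Kernel.measurable_coe _ hA
    | succ n =>
      simp only [retF, ← lintegral_indicator hA.compl]
      exact (ih.indicator hA.compl).lintegral_kernel

/-- `P_x(τ_A ≤ n)`. -/
noncomputable def retS (P : Kernel X X) (A : Set X) (n : ℕ) (x : X) : ℝ≥0∞ :=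
  ∑ k ∈ Finset.range n, retF P A (k + 1) x

/-- `∑_{k=1}^n P^k(x, A)`. -/
noncomputable def potS (P : Kernel X X) (A : Set X) (n : ℕ) (x : X) : ℝ≥0∞ :=
  ∑ k ∈ Finset.range n, iterP P (k + 1) x A

lemma measurable_retS (P : Kernel X X) {A : Set X} (hA : MeasurableSet A) (n : ℕ) :
    Measurable (retS P A n) :=
  Finset.measurable_fun_sum _ fun _ _ => measurable_retF P hA _

lemma measurable_potS (P : Kernel X X) {A : Set X} (hA : MeasurableSet A) (n : ℕ) :
    Measurable (potS P A n) :=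
  Finset.measurable_fun_sum _ fun _ _ => measurable_iterP P hA _

lemma measurable_retL (P : Kernel X X) {A : Set X} (hA : MeasurableSet A) :
    Measurable (retL P A) :=
  Measurable.tsum fun k => measurable_retF P hA k

lemma retL_eq (P : Kernel X X) (A : Set X) (x : X) :
    retL P A x = ∑' n, retF P A (n + 1) x := by
  rw [retL, tsum_eq_zero_add' ENNReal.summable]
  simp [retF]

lemma retL_le_of_retS_le {P : Kernel X X} {A : Set X} {x : X} {c : ℝ≥0∞}
    (h : ∀ n, retS P A n x ≤ c) : retL P A x ≤ c := by
  rw [retL_eq]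
  exact ENNReal.tsum_le_of_sum_range_le h

lemma retS_le_retL (P : Kernel X X) (A : Set X) (n : ℕ) (x : X) : retS P A n x ≤ retL P A x := by
  rw [retL_eq]
  exact ENNReal.sum_le_tsum _

lemma retS_zero (P : Kernel X X) (A : Set X) (x : X) : retS P A 0 x = 0 := by simp [retS]

lemma retS_succ (P : Kernel X X) {A : Set X} (hA : MeasurableSet A) (n : ℕ) (x : X) :
    retS P A (n + 1) x = P x A + ∫⁻ y in Aᶜ, retS P A n y ∂(P x) := by
  simp only [retS]
  rw [Finset.sum_range_succ', lintegral_finsetSum _ fun k _ => measurable_retF P hA _, add_comm]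
  rfl

lemma potS_zero (P : Kernel X X) (A : Set X) (x : X) : potS P A 0 x = 0 := by simp [potS]

lemma potS_succ (P : Kernel X X) {A : Set X} (hA : MeasurableSet A) (n : ℕ) (x : X) :
    potS P A (n + 1) x = ∫⁻ y, A.indicator 1 y + potS P A n y ∂(P x) := by
  simp only [potS]
  rw [lintegral_add_left (measurable_one.indicator hA), Finset.sum_range_succ',
    lintegral_finsetSum _ fun k _ => measurable_iterP P hA _, add_comm]
  rfl

/-- One step of `potS`, split according to whether the chain lands in `A` or not. -/
lemma potS_succ_split (P : Kernel X X) {A : Set X} (hA : MeasurableSet A) (n : ℕ) (x : X) :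
    potS P A (n + 1) x =
      ∫⁻ y in A, (1 + potS P A n y) ∂(P x) + ∫⁻ y in Aᶜ, potS P A n y ∂(P x) := by
  rw [potS_succ P hA, ← lintegral_add_compl _ hA]
  congr 1
  · exact setLIntegral_congr_fun hA fun y hy => by simp [hy]
  · exact setLIntegral_congr_fun hA.compl fun y hy => by
      simp [Set.indicator_of_notMem (show y ∉ A from hy)]

lemma potS_le (P : Kernel X X) (A : Set X) (n : ℕ) (x : X) :
    potS P A n x ≤ ∑' n, iterP P (n + 1) x A := ENNReal.sum_le_tsum _

lemma potS_mono (P : Kernel X X) (A : Set X) {m n : ℕ} (h : m ≤ n) (x : X) :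
    potS P A m x ≤ potS P A n x :=
  Finset.sum_le_sum_of_subset (Finset.range_mono h)

lemma potS_le_nat {P : Kernel X X} (hP : ∀ x, P x Set.univ ≤ 1) {A : Set X}
    (hA : MeasurableSet A) (n : ℕ) (x : X) : potS P A n x ≤ n := by
  calc potS P A n x ≤ ∑ k ∈ Finset.range n, 1 := Finset.sum_le_sum fun k _ => by
        rw [iterP_eq P hA]
        exact (measure_mono (Set.subset_univ _)).trans (powK_le_one hP _ _)
    _ = n := by simp

lemma retS_le_one {P : Kernel X X} (hP : ∀ x, P x Set.univ ≤ 1) {A : Set X}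
    (hA : MeasurableSet A) (n : ℕ) (x : X) : retS P A n x ≤ 1 := by
  induction n generalizing x with
  | zero => simp [retS_zero]
  | succ n ih =>
    rw [retS_succ P hA]
    calc P x A + ∫⁻ y in Aᶜ, retS P A n y ∂(P x)
        ≤ P x A + ∫⁻ _ in Aᶜ, 1 ∂(P x) := by gcongr with y; exact ih y
      _ = P x Set.univ := by simp [measure_add_measure_compl hA]
      _ ≤ 1 := hP x

lemma retL_le_one {P : Kernel X X} (hP : ∀ x, P x Set.univ ≤ 1) {A : Set X}
    (hA : MeasurableSet A) (x : X) : retL P A x ≤ 1 :=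
  retL_le_of_retS_le fun n => retS_le_one hP hA n x

/-- Return probabilities are monotone in the target set. -/
lemma retS_mono_set {P : Kernel X X} (hP : ∀ x, P x Set.univ ≤ 1) {A C : Set X}
    (hA : MeasurableSet A) (hC : MeasurableSet C) (hAC : A ⊆ C) (n : ℕ) (x : X) :
    retS P A n x ≤ retS P C n x := by
  induction n generalizing x with
  | zero => simp [retS_zero]
  | succ n ih =>
    rw [retS_succ P hA, retS_succ P hC]
    have hsplit : Aᶜ = (C \ A) ∪ Cᶜ := by
      ext y; by_cases hy : y ∈ C <;> by_cases hy' : y ∈ A <;> simp_all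
      exact hy (hAC hy')
    have hd : Disjoint (C \ A) Cᶜ := disjoint_compl_right.mono_left Set.sdiff_subset
    rw [hsplit, lintegral_union hC.compl hd, ← add_assoc]
    gcongr with y
    · calc P x A + ∫⁻ y in C \ A, retS P A n y ∂(P x)
          ≤ P x A + ∫⁻ _ in C \ A, 1 ∂(P x) := by
            gcongr with y; exact retS_le_one hP hA n y
        _ = P x C := by
            rw [setLIntegral_one, ← measure_inter_add_sdiff C hA, Set.inter_eq_right.2 hAC]
    · exact ih y

/-- A first return to `C` is a first return to `C' ⊆ C` or a visit to `C \ C'`. -/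
lemma retF_le (P : Kernel X X) {C' C : Set X} (hC' : MeasurableSet C')
    (hC : MeasurableSet C) (h : C' ⊆ C) (n : ℕ) (x : X) :
    retF P C (n + 1) x ≤ retF P C' (n + 1) x + iterP P (n + 1) x (C \ C') := by
  induction n generalizing x with
  | zero =>
    have : iterP P 1 x (C \ C') = P x (C \ C') := by
      rw [iterP_eq P (hC.diff hC')]; simp [powK]
    simp only [zero_add, retF, this]
    calc P x C ≤ P x (C' ∪ C \ C') := by gcongr; simp
      _ ≤ _ := measure_union_le _ _
  | succ n ih =>
    calc retF P C (n + 1 + 1) x = ∫⁻ y in Cᶜ, retF P C (n + 1) y ∂(P x) := rfl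
      _ ≤ ∫⁻ y in Cᶜ, (retF P C' (n + 1) y + iterP P (n + 1) y (C \ C')) ∂(P x) :=
          lintegral_mono fun y => ih y
      _ = ∫⁻ y in Cᶜ, retF P C' (n + 1) y ∂(P x)
            + ∫⁻ y in Cᶜ, iterP P (n + 1) y (C \ C') ∂(P x) :=
          lintegral_add_left (measurable_retF P hC' _) _
      _ ≤ ∫⁻ y in C'ᶜ, retF P C' (n + 1) y ∂(P x) + ∫⁻ y, iterP P (n + 1) y (C \ C') ∂(P x) := by
          gcongr
          exact Measure.restrict_le_self

/-- Lower bound by strong Markov at the first return: if the expected number of visits to `C`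
(counting time zero) is at least `c` from every point of `C'`, then from any `x` it is at least
`c · L(x, C')`. -/
lemma mul_retL_le (P : Kernel X X) {C' C : Set X} (hC' : MeasurableSet C')
    (hC : MeasurableSet C) (c : ℝ≥0∞) (h : C' ⊆ C)
    (hc : ∀ y ∈ C', c ≤ 1 + ∑' n, iterP P (n + 1) y C) (x : X) :
    c * retL P C' x ≤ ∑' n, iterP P (n + 1) x C := by
  have hm : Measurable fun y => ∑' n, iterP P (n + 1) y C :=
    Measurable.tsum fun n => measurable_iterP P hC _
  have key : ∀ n x, c * retS P C' n x ≤ ∑' n, iterP P (n + 1) x C := by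
    intro n
    induction n with
    | zero => simp [retS_zero]
    | succ n ih =>
      intro x
      have e : ∑' n, iterP P (n + 1) x C
          = ∫⁻ y, (C.indicator 1 y + ∑' n, iterP P (n + 1) y C) ∂(P x) := by
        rw [tsum_eq_zero_add' ENNReal.summable, lintegral_add_left (measurable_one.indicator hC),
          lintegral_tsum fun n => (measurable_iterP P hC _).aemeasurable]
        rfl
      rw [e, ← lintegral_add_compl _ hC', retS_succ P hC', mul_add,
        ← lintegral_const_mul _ (measurable_retS P hC' n), ← setLIntegral_const]
      refine add_le_add (setLIntegral_mono' hC' fun y hy => ?_) (lintegral_mono fun y => ?_)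
      · simpa [h hy] using hc y hy
      · exact (ih y).trans le_add_self
  rw [retL_eq, ENNReal.tsum_eq_iSup_nat, ENNReal.mul_iSup]
  exact iSup_le fun n => key n x

/-- If the return probability to `A` is at most `q` on `A`, the expected number of visits
to `A` is at most `(1 - q)⁻¹` (with `0⁻¹ = ∞`) from every starting point. -/
lemma pot_le {P : Kernel X X} (hP : ∀ x, P x Set.univ ≤ 1) {A : Set X} (hA : MeasurableSet A)
    {q : ℝ≥0∞} (h : ∀ x ∈ A, retL P A x ≤ q) (x : X) :
    ∑' n, iterP P (n + 1) x A ≤ (1 - q)⁻¹ := by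
  refine ENNReal.tsum_le_of_sum_range_le fun N => ?_
  change potS P A N x ≤ _
  set m : ℝ≥0∞ := ⨆ y ∈ A, potS P A N y with hm
  have hmA : ∀ y ∈ A, potS P A N y ≤ m := fun y hy => le_iSup₂ (f := fun y _ => potS P A N y) y hy
  have key : ∀ n ≤ N, ∀ x, potS P A n x ≤ (1 + m) * retS P A n x := by
    intro n
    induction n with
    | zero => simp [potS_zero]
    | succ n ih =>
      intro hn x
      rw [potS_succ_split P hA, retS_succ P hA, mul_add,
        ← lintegral_const_mul _ (measurable_retS P hA n), ← setLIntegral_const]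
      refine add_le_add (setLIntegral_mono' hA fun y hy => ?_)
        (lintegral_mono fun y => ih (by omega) y)
      gcongr
      exact (potS_mono P A (by omega) y).trans (hmA y hy)
  have hmtop : m ≠ ⊤ :=
    ne_top_of_le_ne_top (ENNReal.natCast_ne_top N) (iSup₂_le fun y _ => potS_le_nat hP hA N y)
  have h1 : m ≤ (1 + m) * q := iSup₂_le fun y hy =>
    (key N le_rfl y).trans (by gcongr; exact (retS_le_retL P A N y).trans (h y hy))
  -- `m ≤ (1 + m) q` with `m` finite rearranges to `1 + m ≤ (1 - q)⁻¹`.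
  have h2 : 1 + m ≤ (1 - q)⁻¹ := by
    rw [ENNReal.le_inv_iff_mul_le, ENNReal.mul_sub (by intros; simp [hmtop]), mul_one,
      tsub_le_iff_right]
    gcongr
  calc potS P A N x ≤ (1 + m) * retS P A N x := key N le_rfl x
    _ ≤ (1 + m) * 1 := by gcongr; exact retS_le_one hP hA N x
    _ ≤ _ := by rwa [mul_one]

/-! ### Consequences of irreducibility -/

lemma res_pos {P : Kernel X X} {ψ : Measure X} (hψ : IsIrreducibility P ψ) {A : Set X}
    (hA : MeasurableSet A) (h : 0 < ψ A) (x : X) : 0 < res P x A :=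
  (res_pos_iff P x hA).2 (hψ.2.2 A hA h x)

lemma absolutelyContinuous_res {P : Kernel X X} {ψ : Measure X} (hψ : IsIrreducibility P ψ)
    (x : X) : ψ ≪ res P x := by
  refine Measure.AbsolutelyContinuous.mk fun A hA h => ?_
  by_contra h0
  exact (res_pos hψ hA (pos_iff_ne_zero.2 h0) x).ne' h

lemma measurableSet_res_pos (P : Kernel X X) {A : Set X} (hA : MeasurableSet A) :
    MeasurableSet {x | 0 < res P x A} :=
  measurableSet_lt measurable_const (Kernel.measurable_coe _ hA)

/-- This is where maximality is used: `φK`, with `φ` a finite measure equivalent to `ψ`, is again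
an irreducibility measure, hence dominated by `ψ`; so from `ψ`-almost every point a `ψ`-null set
cannot be reached. -/
lemma null_of_null {P : Kernel X X} (hP : ∀ x, P x Set.univ ≤ 1) {ψ : Measure X}
    (hψ : IsMaxIrreducibility P ψ) {N : Set X} (hN : MeasurableSet N) (h0 : ψ N = 0) :
    ψ {x | 0 < res P x N} = 0 := by
  obtain ⟨hirr, hmax⟩ := hψ
  have hψ0 := hirr.1
  have := hirr.2.1
  obtain ⟨φ, hφ, hψφ, hφψ⟩ := exists_isFiniteMeasure_absolutelyContinuous ψ
  have := isFiniteKernel_res hP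
  have hb : ∀ {A : Set X}, MeasurableSet A → (φ.bind (res P)) A = 0 → ψ {x | 0 < res P x A} = 0 := by
    intro A hA h
    rw [Measure.bind_apply hA (Kernel.measurable _).aemeasurable,
      lintegral_eq_zero_iff (Kernel.measurable_coe _ hA)] at h
    have h2 : φ {y | ¬ res P y A = 0} = 0 := ae_iff.1 h
    simp only [pos_iff_ne_zero]
    exact hψφ h2
  have hirr' : IsIrreducibility P (φ.bind (res P)) := by
    refine ⟨fun h => hψ0 ?_, inferInstance, fun A hA hpos x => ?_⟩
    · have := hb MeasurableSet.univ (by simp [h])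
      have hu : ψ Set.univ ≠ 0 := by simpa using hψ0
      rw [show {x | 0 < res P x Set.univ} = Set.univ from Set.eq_univ_of_forall fun x =>
        res_pos hirr MeasurableSet.univ (pos_iff_ne_zero.2 hu) x] at this
      exact absurd this hu
    · rw [← res_pos_iff P x hA]
      refine res_pos_trans P x hA (res_pos hirr (measurableSet_res_pos P hA) ?_ x)
      rw [pos_iff_ne_zero]
      intro h
      rw [Measure.bind_apply hA (Kernel.measurable _).aemeasurable] at hpos
      refine hpos.ne' ((lintegral_eq_zero_iff (Kernel.measurable_coe _ hA)).2 ?_)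
      refine ae_iff.2 ?_
      simp only [pos_iff_ne_zero] at h
      exact hφψ h
  have h1 : (φ.bind (res P)) N = 0 := hmax _ hirr' h0
  exact hb hN h1

/-! ### Existence of a petite set -/

/-- Markov's inequality: a set of small product measure has small sections over a set of first
coordinates of positive measure. -/
lemma exists_section {φ : Measure X} [IsProbabilityMeasure φ] {G : Set (X × X)}
    (hG : MeasurableSet G) (h : φ.prod φ G ≤ 8⁻¹) :
    0 < φ {x | φ (Prod.mk x ⁻¹' G) < 4⁻¹} := by
  rw [pos_iff_ne_zero]
  intro h0
  have hm := measurable_measure_prodMk_left (ν := φ) hG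
  have h1 : φ {x | 4⁻¹ ≤ φ (Prod.mk x ⁻¹' G)} = 1 := by
    rw [← prob_compl_eq_zero_iff (measurableSet_le measurable_const hm)]
    simpa [Set.compl_ofPred] using h0
  have h2 := mul_meas_ge_le_lintegral (μ := φ) hm 4⁻¹
  rw [h1, mul_one, ← Measure.prod_apply hG] at h2
  have h3 := h2.trans h
  rw [ENNReal.inv_le_inv] at h3
  norm_num at h3

lemma exists_petite [MeasurableSpace.CountablyGenerated X] {P : Kernel X X}
    (hP : ∀ x, P x Set.univ ≤ 1) {ψ : Measure X} (hψ : IsIrreducibility P ψ) :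
    ∃ B, InBPlus ψ B ∧ PetiteSet P B := by
  have hψ0 := hψ.1
  have := hψ.2.1
  have := isFiniteKernel_res hP
  obtain ⟨φ, hφ, hψφ, hφψ⟩ : ∃ φ : Measure X, IsProbabilityMeasure φ ∧ ψ ≪ φ ∧ φ ≪ ψ := by
    obtain ⟨φ, hφ, hψφ, hφψ⟩ := exists_isFiniteMeasure_absolutelyContinuous ψ
    have : NeZero φ := ⟨fun h => hψ0 (Measure.absolutelyContinuous_zero_iff.1 (h ▸ hψφ))⟩
    refine ⟨(φ Set.univ)⁻¹ • φ, inferInstance, hψφ.trans ?_, ?_⟩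
    · exact Measure.absolutelyContinuous_smul (by simp)
    · exact Measure.smul_absolutelyContinuous.trans hφψ
  set k : X → X → ℝ≥0∞ := Kernel.rnDeriv (res P) (Kernel.const X φ) with hk
  have hkm : Measurable (Function.uncurry k) := Kernel.measurable_rnDeriv _ _
  have hk1 : ∀ x, Measurable (k x) := fun x => hkm.of_uncurry_left
  have hkpos : ∀ x, ∀ᵐ y ∂φ, 0 < k x y := by
    intro x
    have h1 : k x =ᵐ[φ] (res P x).rnDeriv φ := by
      simpa using Kernel.rnDeriv_eq_rnDeriv_measure (κ := res P) (η := Kernel.const X φ) (a := x)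
    have h2 := Measure.rnDeriv_pos' (hφψ.trans (absolutelyContinuous_res hψ x))
    filter_upwards [h1, h2] with y hy1 hy2
    rwa [hy1]
  have hkK : ∀ x, ∀ f : X → ℝ≥0∞, Measurable f →
      ∫⁻ y, k x y * f y ∂φ ≤ ∫⁻ y, f y ∂(res P x) := by
    intro x f hf
    have h1 := Kernel.withDensity_rnDeriv_le (res P) (Kernel.const X φ) x
    rw [Kernel.withDensity_apply _ (Kernel.measurable_rnDeriv _ _), Kernel.const_apply] at h1
    calc _ = ∫⁻ y, f y ∂(φ.withDensity (k x)) :=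
          (lintegral_withDensity_eq_lintegral_mul _ (hk1 x) hf).symm
      _ ≤ _ := lintegral_mono' h1 le_rfl
  -- The set where `k` is below level `1/(n+1)`; it shrinks to a null set as `n → ∞`.
  set G : ℕ → Set (X × X) := fun n => {p | k p.1 p.2 < ((n : ℝ≥0∞) + 1)⁻¹} with hGdef
  have hGm : ∀ n, MeasurableSet (G n) := fun n => measurableSet_lt hkm measurable_const
  have hGanti : Antitone G := by
    intro m n hmn p hp
    refine lt_of_lt_of_le (show k p.1 p.2 < ((n : ℝ≥0∞) + 1)⁻¹ from hp) ?_
    gcongr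
  have hG0 : φ.prod φ (⋂ n, G n) = 0 := by
    rw [Measure.measure_prod_null (MeasurableSet.iInter hGm)]
    refine Filter.Eventually.of_forall fun x => ?_
    refine measure_mono_null (fun y hy => ?_) (ae_iff.1 (hkpos x))
    simp only [Set.mem_preimage, Set.mem_iInter] at hy
    simp only [Set.mem_ofPred_eq, not_lt, nonpos_iff_eq_zero]
    by_contra h
    obtain ⟨n, hn⟩ := ENNReal.exists_inv_nat_lt h
    have := hy n
    simp only [hGdef, Set.mem_ofPred_eq] at this
    exact absurd (hn.trans this) (by
      rw [not_lt, ENNReal.inv_le_inv]; exact le_self_add)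
  obtain ⟨n, hn⟩ : ∃ n, φ.prod φ (G n) ≤ 8⁻¹ := by
    have ht := tendsto_measure_iInter_atTop (μ := φ.prod φ)
      (fun n => (hGm n).nullMeasurableSet) hGanti ⟨0, by finiteness⟩
    rw [hG0] at ht
    obtain ⟨n, hn⟩ := (ht.eventually (gt_mem_nhds (show (0 : ℝ≥0∞) < 8⁻¹ by simp))).exists
    exact ⟨n, hn.le⟩
  set δ : ℝ≥0∞ := ((n : ℝ≥0∞) + 1)⁻¹ with hδ
  have hδ0 : δ ≠ 0 := by simp [hδ]
  set B : Set X := {x | φ (Prod.mk x ⁻¹' G n) < 4⁻¹} with hB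
  set C : Set X := {y | φ (Prod.mk y ⁻¹' (Prod.swap ⁻¹' G n)) < 4⁻¹} with hC
  have hGs : MeasurableSet (Prod.swap ⁻¹' G n) := measurable_swap (hGm n)
  have hBm : MeasurableSet B :=
    measurableSet_lt (measurable_measure_prodMk_left (hGm n)) measurable_const
  have hCm : MeasurableSet C :=
    measurableSet_lt (measurable_measure_prodMk_left hGs) measurable_const
  have hBpos : 0 < φ B := exists_section (hGm n) hn
  have hCpos : 0 < φ C := by
    refine exists_section hGs ?_
    rwa [← Measure.map_apply measurable_swap (hGm n), Measure.prod_swap]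
  -- For `x ∈ B`, `y ∈ C`, at least half of the intermediate points `z` are good for both steps.
  have hmid : ∀ x ∈ B, ∀ y ∈ C, δ * δ * 2⁻¹ ≤ ∫⁻ z, k x z * k z y ∂φ := by
    intro x hx y hy
    set D : Set X := (Prod.mk x ⁻¹' G n) ∪ (Prod.mk y ⁻¹' (Prod.swap ⁻¹' G n)) with hD
    have hDm : MeasurableSet D :=
      (measurable_prodMk_left (hGm n)).union (measurable_prodMk_left hGs)
    have hDle : φ D ≤ 2⁻¹ := by
      refine (measure_union_le _ _).trans ((add_le_add hx.le hy.le).trans ?_)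
      rw [← two_mul, show (4 : ℝ≥0∞) = 2 * 2 by norm_num,
        ENNReal.mul_inv (by simp) (by simp), ← mul_assoc, ENNReal.mul_inv_cancel (by simp) (by simp),
        one_mul]
    have hDc : 2⁻¹ ≤ φ Dᶜ := by
      rw [prob_compl_eq_one_sub hDm, ← ENNReal.one_sub_inv_two]
      gcongr
    calc δ * δ * 2⁻¹ ≤ δ * δ * φ Dᶜ := by gcongr
      _ = ∫⁻ _ in Dᶜ, δ * δ ∂φ := (setLIntegral_const _ _).symm
      _ ≤ ∫⁻ z in Dᶜ, k x z * k z y ∂φ := by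
          refine setLIntegral_mono' hDm.compl fun z hz => ?_
          simp only [hD, hGdef, Set.mem_compl_iff, Set.mem_union, Set.mem_preimage,
            Set.mem_ofPred_eq, Prod.swap, not_or, not_lt] at hz
          exact mul_le_mul' hz.1 hz.2
      _ ≤ _ := setLIntegral_le_lintegral _ _
  refine ⟨B, ⟨hBm, ?_⟩, sq, (δ * δ * 2⁻¹) • φ.restrict C, tsum_sq, ?_, ?_⟩
  · rw [pos_iff_ne_zero]
    exact fun h => hBpos.ne' (hφψ h)
  · intro h
    have h1 := congrArg (fun μ : Measure X => μ Set.univ) h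
    simp [hδ0, hCpos.ne'] at h1
  · intro x hx A hA
    rw [← lintegral_res_res P x hA]
    calc ((δ * δ * 2⁻¹) • φ.restrict C) A = ∫⁻ _ in A ∩ C, δ * δ * 2⁻¹ ∂φ := by
          rw [setLIntegral_const, Measure.smul_apply, Measure.restrict_apply hA, smul_eq_mul]
      _ ≤ ∫⁻ y in A ∩ C, ∫⁻ z, k x z * k z y ∂φ ∂φ :=
          setLIntegral_mono' (hA.inter hCm) fun y hy => hmid x hx y hy.2
      _ ≤ ∫⁻ y in A, ∫⁻ z, k x z * k z y ∂φ ∂φ := lintegral_mono_set Set.inter_subset_left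
      _ = ∫⁻ z, ∫⁻ y in A, k x z * k z y ∂φ ∂φ := by
          refine lintegral_lintegral_swap (Measurable.aemeasurable ?_)
          exact ((hk1 x).comp measurable_snd).mul (hkm.comp measurable_swap)
      _ = ∫⁻ z, k x z * ∫⁻ y in A, k z y ∂φ ∂φ :=
          lintegral_congr fun z => lintegral_const_mul _ (hk1 z)
      _ ≤ ∫⁻ z, k x z * res P z A ∂φ := by
          refine lintegral_mono fun z => ?_
          gcongr
          have := hkK z (A.indicator 1) (measurable_one.indicator hA)
          rw [lintegral_indicator_one hA] at this
          refine le_trans (le_of_eq ?_) this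
          rw [← lintegral_indicator hA]
          refine lintegral_congr fun y => ?_
          by_cases hy : y ∈ A <;> simp [hy]
      _ ≤ ∫⁻ z, res P z A ∂(res P x) := hkK x _ (Kernel.measurable_coe _ hA)

/-! ### The two implications -/

/-- One set of `B⁺(X)` with return probability bounded away from one makes the chain transient:
the sets `{K(·, A) ≥ 1/(n+1)}` increase to `X` and inherit a finite potential from `A`. -/
lemma transient_of_retL_lt {P : Kernel X X} (hP : ∀ x, P x Set.univ ≤ 1) {ψ : Measure X}
    (hψ : IsMaxIrreducibility P ψ) {A : Set X} (hA : InBPlus ψ A)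
    (h : (⨆ x ∈ A, retL P A x) < 1) : Transient P ψ := by
  obtain ⟨hAm, hApos⟩ := hA
  set q := ⨆ x ∈ A, retL P A x with hq
  have hpot := pot_le hP hAm (q := q) fun x hx => le_iSup₂ (f := fun x _ => retL P A x) x hx
  set M : ℝ≥0∞ := (1 - q)⁻¹ with hM
  have hMtop : M < ⊤ := by simp [hM, h]
  have hpos := res_pos hψ.1 hAm hApos
  set E : ℕ → Set X := fun n => {x | ((n : ℝ≥0∞) + 1)⁻¹ ≤ res P x A} with hE
  have hEm : ∀ n, MeasurableSet (E n) := fun n =>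
    measurableSet_le measurable_const (Kernel.measurable_coe _ hAm)
  have hEmono : Monotone E := by
    intro m n hmn x hx
    refine le_trans ?_ (show ((m : ℝ≥0∞) + 1)⁻¹ ≤ res P x A from hx)
    gcongr
  have hEU : ⋃ n, E n = Set.univ := by
    refine Set.eq_univ_of_forall fun x => ?_
    obtain ⟨n, hn⟩ := ENNReal.exists_inv_nat_lt (hpos x).ne'
    exact Set.mem_iUnion.2 ⟨n, le_trans (ENNReal.inv_le_inv.2 le_self_add) hn.le⟩
  obtain ⟨N, hN⟩ : ∃ N, 0 < ψ (E N) := by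
    refine exists_measure_pos_of_not_measure_iUnion_null ?_
    rw [hEU]
    simpa using hψ.1.1
  refine ⟨hψ, fun i => E (N + i), ?_, fun i => ⟨⟨hEm _, hN.trans_le
    (measure_mono (hEmono (Nat.le_add_right _ _)))⟩, ?_⟩⟩
  · refine Set.eq_univ_of_forall fun x => ?_
    obtain ⟨n, hn⟩ := Set.mem_iUnion.1 (hEU ▸ Set.mem_univ x)
    exact Set.mem_iUnion.2 ⟨n, hEmono (Nat.le_add_left _ _) hn⟩
  · set n := N + i
    have hn0 : ((n : ℝ≥0∞) + 1)⁻¹ ≠ 0 := by simp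
    have hntop : ((n : ℝ≥0∞) + 1)⁻¹ ≠ ⊤ := by simp
    refine lt_of_le_of_lt (iSup₂_le (a := ((n : ℝ≥0∞) + 1) * M) fun x _ => ?_)
      (ENNReal.mul_lt_top (by finiteness) hMtop)
    have key : ((n : ℝ≥0∞) + 1)⁻¹ * ∑' m, iterP P (m + 1) x (E n) ≤ M := by
      calc ((n : ℝ≥0∞) + 1)⁻¹ * ∑' m, iterP P (m + 1) x (E n)
          = ∑' m, ((n : ℝ≥0∞) + 1)⁻¹ * powK P (m + 1) x (E n) := by
            simp only [iterP_eq P (hEm n), ENNReal.tsum_mul_left]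
        _ ≤ ∑' m, ∑' j, wt j * powK P (j + 1 + (m + 1)) x A := by
            refine ENNReal.tsum_le_tsum fun m => ?_
            rw [← lintegral_powK_res P x _ hAm]
            exact mul_meas_ge_le_lintegral (Kernel.measurable_coe _ hAm) _
        _ = ∑' j, wt j * ∑' m, powK P (m + (j + 1) + 1) x A := by
            rw [ENNReal.tsum_comm]
            simp only [ENNReal.tsum_mul_left]
            refine tsum_congr fun j => ?_
            congr 1
            refine tsum_congr fun m => ?_
            rw [show j + 1 + (m + 1) = m + (j + 1) + 1 by omega]
        _ ≤ ∑' j, wt j * M := by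
            refine ENNReal.tsum_le_tsum fun j => ?_
            gcongr
            refine le_trans ?_ (hpot x)
            simp only [iterP_eq P hAm]
            exact ENNReal.tsum_comp_le_tsum_of_injective (add_left_injective (j + 1))
              (fun m => powK P (m + 1) x A)
        _ = M := by rw [ENNReal.tsum_mul_right, tsum_wt, one_mul]
    rwa [mul_comm, ← div_eq_mul_inv, ENNReal.div_le_iff (by simp) (by finiteness), mul_comm] at key

/-- A set of `B⁺(X)` with bounded potential contains a set of `B⁺(X)` whose return probability is
bounded away from one. Otherwise the chain would return to `C` almost surely from almost every
point of `C`, and would visit `C` infinitely often. -/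
lemma exists_retL_lt {P : Kernel X X} (hP : ∀ x, P x Set.univ ≤ 1) {ψ : Measure X}
    (hψ : IsMaxIrreducibility P ψ) {C : Set X} (hC : InBPlus ψ C)
    (h : ∀ x ∈ C, ∑' n, iterP P (n + 1) x C < ⊤) :
    ∃ A ⊆ C, InBPlus ψ A ∧ (⨆ x ∈ A, retL P A x) < 1 := by
  obtain ⟨hCm, hCpos⟩ := hC
  have hLm := measurable_retL P hCm
  by_cases hN : ψ (C ∩ {x | retL P C x < 1}) = 0
  · exfalso
    set N := C ∩ {x | retL P C x < 1} with hNdef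
    have hNm : MeasurableSet N := hCm.inter (measurableSet_lt hLm measurable_const)
    have hR := null_of_null hP hψ hNm hN
    have hRm := measurableSet_res_pos P hNm
    set R := {x | 0 < res P x N} with hRdef
    -- Points of `C` that return to `C` surely and cannot reach the exceptional set `N`.
    set C' := C \ (N ∪ R) with hC'
    have hC'm : MeasurableSet C' := hCm.diff (hNm.union hRm)
    have hC'C : C' ⊆ C := Set.sdiff_subset
    have hC'pos : 0 < ψ C' := by
      rw [hC', measure_sdiff_null (measure_union_null hN hR)]
      exact hCpos
    have hunreach : ∀ x ∈ C', ∑' n, iterP P (n + 1) x (C \ C') = 0 := by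
      intro x hx
      by_contra h0
      have h1 := (res_pos_iff P x (hCm.diff hC'm)).2 (pos_iff_ne_zero.2 h0)
      have hxR : ¬ 0 < res P x N := fun hR' => hx.2 (Or.inr hR')
      have h2 : res P x (N ∪ R) = 0 := by
        refine measure_union_null (by simpa using hxR) ?_
        by_contra hR'
        exact hxR (res_pos_trans P x hNm (pos_iff_ne_zero.2 hR'))
      exact h1.ne' (measure_mono_null (by simp [hC']) h2)
    have hret : ∀ x ∈ C', 1 ≤ retL P C' x := by
      intro x hx
      have h1 : 1 ≤ retL P C x := by
        by_contra hlt
        exact hx.2 (Or.inl ⟨hx.1, not_le.1 hlt⟩)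
      refine h1.trans ?_
      calc retL P C x ≤ retL P C' x + ∑' n, iterP P (n + 1) x (C \ C') := by
            rw [retL_eq, retL_eq, ← ENNReal.tsum_add]
            exact ENNReal.tsum_le_tsum fun n => retF_le P hC'm hCm hC'C n x
        _ = retL P C' x := by rw [hunreach x hx, add_zero]
    set c : ℝ≥0∞ := ⨅ y ∈ C', (1 + ∑' n, iterP P (n + 1) y C) with hc
    have hcle : ∀ y ∈ C', c ≤ 1 + ∑' n, iterP P (n + 1) y C := fun y hy =>
      iInf₂_le (f := fun y _ => 1 + ∑' n, iterP P (n + 1) y C) y hy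
    -- Returning surely to `C'` costs one more visit, so the infimum satisfies `1 + c ≤ c`.
    have h1c : 1 + c ≤ c := le_iInf₂ fun y hy => by
      gcongr
      calc c ≤ c * retL P C' y := le_mul_of_one_le_right' (hret y hy)
        _ ≤ _ := mul_retL_le P hC'm hCm c hC'C hcle y
    obtain ⟨x, hx⟩ := nonempty_of_measure_ne_zero hC'pos.ne'
    have hcfin : c ≠ ⊤ := ne_top_of_le_ne_top
      (ENNReal.add_ne_top.2 ⟨ENNReal.one_ne_top, (h x hx.1).ne⟩) (hcle x hx)
    exact absurd h1c (not_le.2 (by rw [add_comm]; exact ENNReal.lt_add_right hcfin one_ne_zero))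
  · have hU : C ∩ {x | retL P C x < 1}
        ⊆ ⋃ n : ℕ, C ∩ {x | retL P C x ≤ 1 - ((n : ℝ≥0∞) + 1)⁻¹} := by
      rintro x ⟨hx, hlt⟩
      obtain ⟨n, hn⟩ := ENNReal.exists_inv_nat_lt (tsub_pos_of_lt hlt).ne'
      refine Set.mem_iUnion.2 ⟨n, hx, ?_⟩
      have h1 : ((n : ℝ≥0∞) + 1)⁻¹ ≤ 1 - retL P C x :=
        le_trans (ENNReal.inv_le_inv.2 le_self_add) hn.le
      refine ENNReal.le_sub_of_add_le_left (by simp) ?_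
      calc _ ≤ (1 - retL P C x) + retL P C x := by gcongr
        _ = 1 := tsub_add_cancel_of_le (le_of_lt hlt)
    obtain ⟨n, hn⟩ := exists_measure_pos_of_not_measure_iUnion_null
      (fun h0 => hN (measure_mono_null hU h0))
    have hAm : MeasurableSet (C ∩ {x | retL P C x ≤ 1 - ((n : ℝ≥0∞) + 1)⁻¹}) :=
      hCm.inter (measurableSet_le hLm measurable_const)
    refine ⟨_, Set.inter_subset_left, ⟨hAm, hn⟩, ?_⟩
    refine lt_of_le_of_lt (iSup₂_le (a := 1 - ((n : ℝ≥0∞) + 1)⁻¹) fun x hx => ?_)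
      (ENNReal.sub_lt_self (by simp) (by simp) (by simp))
    refine retL_le_of_retS_le fun m => ?_
    exact (retS_mono_set hP hAm hCm Set.inter_subset_left m x).trans
      ((retS_le_retL P C m x).trans hx.2)

theorem transient_iff_return_prob_lt_one_on_petite_sets
    {X : Type*} [MeasurableSpace X] [MeasurableSpace.CountablyGenerated X]
    (P : Kernel X X) (hP : ∀ x, P x Set.univ ≤ 1) (ψ : Measure X)
    (hψ : IsMaxIrreducibility P ψ) :
    Transient P ψ ↔
      ∀ B : Set X, InBPlus ψ B → PetiteSet P B →
        ∃ A : Set X, A ⊆ B ∧ InBPlus ψ A ∧ (⨆ x ∈ A, retL P A x) < 1 := by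
  constructor
  · rintro ⟨-, A, hAU, hA⟩ B ⟨hBm, hBpos⟩ -
    obtain ⟨i, hi⟩ : ∃ i, 0 < ψ (B ∩ A i) := by
      refine exists_measure_pos_of_not_measure_iUnion_null ?_
      rw [← Set.inter_iUnion, hAU, Set.inter_univ]
      exact hBpos.ne'
    have hCm : MeasurableSet (B ∩ A i) := hBm.inter (hA i).1.1
    obtain ⟨D, hD, hD'⟩ := exists_retL_lt hP hψ (C := B ∩ A i) ⟨hCm, hi⟩ fun x hx =>
      calc ∑' n, iterP P (n + 1) x (B ∩ A i) ≤ ∑' n, iterP P (n + 1) x (A i) :=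
            ENNReal.tsum_le_tsum fun n => by
              rw [iterP_eq P hCm, iterP_eq P (hA i).1.1]
              exact measure_mono Set.inter_subset_right
        _ ≤ ⨆ x ∈ A i, ∑' n, iterP P (n + 1) x (A i) :=
            le_iSup₂ (f := fun x _ => ∑' n, iterP P (n + 1) x (A i)) x hx.2
        _ < ⊤ := (hA i).2
    exact ⟨D, hD.trans Set.inter_subset_left, hD'⟩
  · intro h
    obtain ⟨B, hB, hBp⟩ := exists_petite hP hψ.1
    obtain ⟨A, -, hA, hlt⟩ := h B hB hBp
    exact transient_of_retL_lt hP hψ hA hlt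

end MarkovTransience
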